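/- arXiv:1705.05268 — 2 statements merged into one kernel-verified Lean document; each statement's English description precedes it below -/
import Mathlib

section
/- Let p be a prime integer and let Λ be a subgroup of (ℝ/ℤ)^{d+1} of order p such that ht(λ) is an integer for every λ ∈ Λ, Λ is non-pyramidal, and the height distribution of Λ is symmetric, i.e., setting s = max{ht(λ) : λ ∈ Λ}, for every integer i one has #{λ ∈ Λ : ht(λ) = i} = #{λ ∈ Λ : ht(λ) = s − i} (this symmetry is the condition that the corresponding lattice simplex is Gorenstein). Then p divides d+1, and setting r = (d+1)/p, Λ is the cyclic subgroup generated by (1/p, …, 1/p) and ht is a bijection from Λ onto {0, r, 2r, …, (p−1)r}, i.e., Λ has δ-polynomial 1 + t^{r} + t^{2r} + ⋯ + t^{(p−1)r}. -/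
open scoped BigOperators

local instance : Fact ((0:ℝ) < 1) := ⟨one_pos⟩

noncomputable def fracR (x : AddCircle (1:ℝ)) : ℝ :=
  ((AddCircle.equivIco 1 0) x : ℝ)

noncomputable def ht {ι : Type*} [Fintype ι] (x : ι → AddCircle (1:ℝ)) : ℝ :=
  ∑ i, fracR (x i)

/-- `Λ` has δ-polynomial `1 + t^step + t^(2*step) + ⋯ + t^((v-1)*step)` :
the height map is a bijection from `Λ` onto `{j*step : 0 ≤ j ≤ v-1}`. -/
def HasDeltaPoly {ι : Type*} [Fintype ι] (v step : ℕ)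
    (Λ : Set (ι → AddCircle (1:ℝ))) : Prop :=
  Set.BijOn ht Λ {y : ℝ | ∃ j : ℕ, j < v ∧ y = (j : ℝ) * (step : ℝ)}

def NonPyramidal {ι : Type*} [Fintype ι] (Λ : Set (ι → AddCircle (1:ℝ))) : Prop :=
  ∀ i : ι, ∃ x ∈ Λ, x i ≠ 0

/-!
Each nonzero `x ∈ Λ` generates `Λ`, so none of its coordinates vanishes and `ht (-x) = D - ht x`,
where `D = d + 1`. Let `P` be the generating polynomial of the heights and `s` the maximal height.
Replacing each height `h` by `s - h` fixes `P`, and replacing each height `h` except that of `0` by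
`D - h` fixes `P` as well. Comparing the two gives `(X ^ (D - s) - 1) * P = X ^ D - 1`. Hence
`r = D - s` divides `D`, and `P = ∑ j < D / r, X ^ (r * j)`, where `D / r = P(1) = #Λ`.

The coordinates of the element of height `r = D / #Λ` are nonzero and killed by `#Λ`, so each of
them is at least `1 / #Λ`; as they add up to `D / #Λ`, they are all equal to `1 / #Λ`.
-/

section FractionalPart

theorem coe_fracR (x : UnitAddCircle) : ((fracR x : ℝ) : UnitAddCircle) = x :=
  AddCircle.coe_equivIco

theorem fracR_nonneg (x : UnitAddCircle) : 0 ≤ fracR x :=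
  (AddCircle.equivIco 1 0 x).2.1

theorem fracR_lt_one (x : UnitAddCircle) : fracR x < 1 := by
  simpa only [fracR, zero_add] using (AddCircle.equivIco (1 : ℝ) 0 x).2.2

theorem fracR_coe {a : ℝ} (ha : a ∈ Set.Ico 0 1) : fracR a = a :=
  AddCircle.equivIco_coe_of_mem (by rwa [zero_add])

@[simp]
theorem fracR_zero : fracR 0 = 0 :=
  fracR_coe ⟨le_rfl, one_pos⟩

theorem fracR_eq_zero_iff {x : UnitAddCircle} : fracR x = 0 ↔ x = 0 := by
  refine ⟨fun h => ?_, fun h => h ▸ fracR_zero⟩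
  rw [← coe_fracR x, h, AddCircle.coe_zero]

theorem fracR_pos {x : UnitAddCircle} (hx : x ≠ 0) : 0 < fracR x :=
  (fracR_nonneg x).lt_of_ne' (fracR_eq_zero_iff.not.2 hx)

theorem fracR_neg {x : UnitAddCircle} (hx : x ≠ 0) : fracR (-x) = 1 - fracR x := by
  have hcoe : ((1 - fracR x : ℝ) : UnitAddCircle) = -x := by
    rw [AddCircle.coe_sub, AddCircle.coe_period, coe_fracR, zero_sub]
  rw [← hcoe]
  exact fracR_coe ⟨by linarith [fracR_lt_one x], by linarith [fracR_pos hx]⟩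

theorem one_div_le_fracR_of_nsmul_eq_zero {n : ℕ} (hn : 0 < n) {x : UnitAddCircle} (hx : x ≠ 0)
    (hnx : n • x = 0) : 1 / (n : ℝ) ≤ fracR x := by
  have hcoe : ((n • fracR x : ℝ) : UnitAddCircle) = 0 := by
    rw [AddCircle.coe_nsmul, coe_fracR, hnx]
  obtain ⟨z, hz⟩ := (AddCircle.coe_eq_zero_iff 1).1 hcoe
  rw [zsmul_one, nsmul_eq_mul] at hz
  have hn' : (0 : ℝ) < n := mod_cast hn
  have hz_pos : (0 : ℝ) < z := hz ▸ mul_pos hn' (fracR_pos hx)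
  have hz_one : (1 : ℝ) ≤ z := mod_cast hz_pos
  rwa [div_le_iff₀' hn', ← hz]

end FractionalPart

section Height

open Finset

variable {ι : Type*} [Fintype ι]

theorem ht_nonneg (x : ι → UnitAddCircle) : 0 ≤ ht x :=
  sum_nonneg fun i _ => fracR_nonneg (x i)

theorem ht_lt_card [Nonempty ι] (x : ι → UnitAddCircle) : ht x < Fintype.card ι := by
  simpa [ht] using sum_lt_sum_of_nonempty univ_nonempty fun i (_ : i ∈ univ) => fracR_lt_one (x i)

@[simp]
theorem ht_zero : ht (0 : ι → UnitAddCircle) = 0 := by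
  simp [ht]

theorem ht_neg {x : ι → UnitAddCircle} (hx : ∀ i, x i ≠ 0) :
    ht (-x) = Fintype.card ι - ht x := by
  simp [ht, fracR_neg (hx _)]

theorem eq_const_of_nsmul_eq_zero_of_ht_eq {n : ℕ} (hn : 0 < n) {x : ι → UnitAddCircle}
    (hx : ∀ i, x i ≠ 0) (hnx : n • x = 0) (hht : ht x = Fintype.card ι / n) :
    x = fun _ => ((1 / (n : ℝ) : ℝ) : UnitAddCircle) := by
  have hle : ∀ i ∈ univ, 1 / (n : ℝ) ≤ fracR (x i) := fun i _ =>
    one_div_le_fracR_of_nsmul_eq_zero hn (hx i) (congrFun hnx i)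
  have hsum : ∑ _i : ι, 1 / (n : ℝ) = ∑ i, fracR (x i) := by
    rw [← ht, hht, sum_const, card_univ, nsmul_eq_mul, mul_one_div]
  funext i
  rw [(sum_eq_sum_iff_of_le hle).1 hsum i (mem_univ i), coe_fracR]

theorem exists_nat_ht_eq {Λ : Set (ι → UnitAddCircle)} (hint : ∀ x ∈ Λ, ∃ z : ℤ, ht x = z) :
    ∃ h : Λ → ℕ, ∀ x : Λ, ht (x : ι → UnitAddCircle) = h x := by
  have hnat : ∀ x : Λ, ∃ n : ℕ, ht (x : ι → UnitAddCircle) = n := by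
    intro x
    obtain ⟨z, hz⟩ := hint x x.2
    have hz_nonneg : 0 ≤ z := by
      exact_mod_cast (ht_nonneg (x : ι → UnitAddCircle)).trans_eq hz
    lift z to ℕ using hz_nonneg
    exact ⟨z, hz⟩
  choose h hh using hnat
  exact ⟨h, hh⟩

end Height

section GeneratingPolynomial

open Finset Polynomial

/-- The generating polynomial `∑ a, X ^ f a` of an `ℕ`-valued statistic `f` on a finite type. When
`f` is the height on a finite group with integral heights, this is its `δ`-polynomial. -/
noncomputable def generatingPoly {α : Type*} [Fintype α] (f : α → ℕ) : ℤ[X] :=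
  ∑ a, X ^ f a

variable {α β : Type*} [Fintype α] [Fintype β]

theorem coeff_generatingPoly (f : α → ℕ) (n : ℕ) :
    (generatingPoly f).coeff n = (f ⁻¹' {n}).ncard := by
  classical
  have hfiber : f ⁻¹' {n} = ({a | n = f a} : Finset α) := by
    ext a
    simp [eq_comm]
  rw [hfiber, Set.ncard_coe_finset]
  simp [generatingPoly, coeff_X_pow]

theorem generatingPoly_eq_iff {f : α → ℕ} {g : β → ℕ} :
    generatingPoly f = generatingPoly g ↔ ∀ n, (f ⁻¹' {n}).ncard = (g ⁻¹' {n}).ncard := by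
  simp only [Polynomial.ext_iff, coeff_generatingPoly, Nat.cast_inj]

theorem eval_one_generatingPoly (f : α → ℕ) :
    (generatingPoly f).eval 1 = Fintype.card α := by
  simp [generatingPoly, eval_finsetSum]

theorem card_eq_of_generatingPoly_eq {f : α → ℕ} {g : β → ℕ}
    (hfg : generatingPoly f = generatingPoly g) : Fintype.card α = Fintype.card β := by
  have h := congrArg (eval 1) hfg
  rw [eval_one_generatingPoly, eval_one_generatingPoly] at h
  exact_mod_cast h

theorem range_eq_of_generatingPoly_eq {f : α → ℕ} {g : β → ℕ}
    (hfg : generatingPoly f = generatingPoly g) : Set.range f = Set.range g := by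
  ext n
  rw [← Set.preimage_singleton_nonempty, ← Set.preimage_singleton_nonempty,
    ← Set.ncard_pos, ← Set.ncard_pos, generatingPoly_eq_iff.1 hfg]

theorem injective_of_generatingPoly_eq {f : α → ℕ} {g : β → ℕ} (hg : Function.Injective g)
    (hfg : generatingPoly f = generatingPoly g) : Function.Injective f := by
  intro a b hab
  have hcard : (f ⁻¹' {f a}).ncard ≤ 1 := by
    rw [generatingPoly_eq_iff.1 hfg, Set.ncard_le_one_iff]
    exact fun hx hy => hg (hx.trans hy.symm)
  exact (Set.ncard_le_one_iff (Set.toFinite _)).1 hcard rfl hab.symm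

theorem generatingPoly_tsub {f : α → ℕ} {s : ℕ} (hle : ∀ a, f a ≤ s)
    (hsym : ∀ n ≤ s, (f ⁻¹' {n}).ncard = (f ⁻¹' {s - n}).ncard) :
    generatingPoly (fun a => s - f a) = generatingPoly f := by
  rw [generatingPoly_eq_iff]
  intro n
  rcases le_or_gt n s with hn | hn
  · rw [hsym n hn]
    congr 1
    ext a
    grind
  · congr 1
    ext a
    grind

end GeneratingPolynomial

section GeometricSum

open Finset Polynomial

variable {R : Type*} [CommRing R] [Nontrivial R]

theorem dvd_of_X_pow_sub_one_dvd {m n : ℕ} (hm : 0 < m)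
    (hdvd : (X ^ m - 1 : R[X]) ∣ X ^ n - 1) : m ∣ n := by
  have hrem : (X ^ m - 1 : R[X]) ∣ X ^ (n % m) - 1 := by
    have hsplit : (X ^ (n % m) - 1 : R[X]) =
        (X ^ n - 1) - X ^ (n % m) * (X ^ (m * (n / m)) - 1) := by
      rw [mul_sub, ← pow_add, Nat.mod_add_div]
      ring
    rw [hsplit]
    exact dvd_sub hdvd ((pow_one_sub_dvd_pow_mul_sub_one X _ _).mul_left _)
  have hzero : (X ^ (n % m) - 1 : R[X]) = 0 := by
    by_contra hne
    refine (monic_X_pow_sub_C (1 : R) hm.ne').not_dvd_of_natDegree_lt hne ?_ hrem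
    rw [← C_1, natDegree_X_pow_sub_C, natDegree_X_pow_sub_C]
    exact Nat.mod_lt n hm
  apply Nat.dvd_of_mod_eq_zero
  simpa using congrArg natDegree (sub_eq_zero.1 hzero)

theorem exists_eq_geom_sum_of_X_pow_sub_one_mul_eq {m n : ℕ} (hm : 0 < m) {P : R[X]}
    (hP : (X ^ m - 1) * P = X ^ n - 1) :
    ∃ v, n = m * v ∧ P = ∑ j ∈ range v, X ^ (m * j) := by
  obtain ⟨v, rfl⟩ := dvd_of_X_pow_sub_one_dvd hm (Dvd.intro P hP)
  refine ⟨v, rfl, (monic_X_pow_sub_C (1 : R) hm.ne').isRegular.left ?_⟩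
  simp only [map_one, hP, pow_mul, mul_geom_sum]

end GeometricSum

section Reflections

open Finset Polynomial

variable {G : Type*} [AddGroup G] [Fintype G] {f : G → ℕ} {s D : ℕ}

theorem X_pow_sub_one_mul_generatingPoly (hzero : f 0 = 0)
    (hneg : ∀ x ≠ 0, f (-x) + f x = D) (hle : ∀ x, f x ≤ s) (hsD : s ≤ D)
    (hsym : generatingPoly (fun x => s - f x) = generatingPoly f) :
    (X ^ (D - s) - 1) * generatingPoly f = X ^ D - 1 := by
  classical
  have hterm : ∀ x, (X ^ (D - s) * X ^ (s - f x) : ℤ[X]) =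
      X ^ f (-x) + if x = 0 then X ^ D - 1 else 0 := by
    intro x
    rw [← pow_add, tsub_add_tsub_cancel hsD (hle x)]
    split_ifs with hx
    · simp [hx, hzero]
    · rw [add_zero, ← hneg x hx, Nat.add_sub_cancel]
  have hshift : X ^ (D - s) * generatingPoly f = generatingPoly f + (X ^ D - 1) :=
    calc X ^ (D - s) * generatingPoly f
        = ∑ x, X ^ (D - s) * X ^ (s - f x) := by rw [← hsym, generatingPoly, mul_sum]
      _ = ∑ x, X ^ f (-x) + (X ^ D - 1) := by simp [hterm, sum_add_distrib]
      _ = generatingPoly f + (X ^ D - 1) := by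
        congr 1
        exact Equiv.sum_comp (Equiv.neg G) fun x => (X ^ f x : ℤ[X])
  rw [sub_mul, hshift, one_mul, add_sub_cancel_left]

theorem generatingPoly_eq_arithmetic_progression (hzero : f 0 = 0)
    (hneg : ∀ x ≠ 0, f (-x) + f x = D) (hle : ∀ x, f x ≤ s) (hsD : s < D)
    (hsym : ∀ n ≤ s, (f ⁻¹' {n}).ncard = (f ⁻¹' {s - n}).ncard) :
    D = (D - s) * Fintype.card G ∧
      generatingPoly f = generatingPoly fun j : Fin (Fintype.card G) => (D - s) * j := by
  obtain ⟨v, hv, hP⟩ := exists_eq_geom_sum_of_X_pow_sub_one_mul_eq (Nat.sub_pos_of_lt hsD)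
    (X_pow_sub_one_mul_generatingPoly hzero hneg hle hsD.le (generatingPoly_tsub hle hsym))
  rw [← Fin.sum_univ_eq_sum_range fun j => (X ^ ((D - s) * j) : ℤ[X])] at hP
  obtain rfl : Fintype.card G = v :=
    (card_eq_of_generatingPoly_eq hP).trans (Fintype.card_fin v)
  exact ⟨hv, hP⟩

end Reflections

section HeightDistribution

variable {ι : Type*} [Fintype ι]

theorem hasDeltaPoly_of_generatingPoly_eq {Λ : Set (ι → UnitAddCircle)} [Fintype Λ] {h : Λ → ℕ}
    (hh : ∀ x : Λ, ht (x : ι → UnitAddCircle) = h x) {v r : ℕ} (hr : 0 < r)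
    (hgen : generatingPoly h = generatingPoly fun j : Fin v => r * j) : HasDeltaPoly v r Λ := by
  have hinj : Function.Injective h := injective_of_generatingPoly_eq
    (fun _ _ hij => Fin.ext (Nat.eq_of_mul_eq_mul_left hr hij)) hgen
  have hrange := Set.ext_iff.1 (range_eq_of_generatingPoly_eq hgen)
  refine ⟨fun x hx => ?_, fun x hx y hy hxy => ?_, ?_⟩
  · obtain ⟨j, hj⟩ := (hrange _).1 ⟨⟨x, hx⟩, rfl⟩
    refine ⟨j, j.2, ?_⟩
    rw [hh ⟨x, hx⟩, ← hj, Nat.cast_mul, mul_comm]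
  · rw [hh ⟨x, hx⟩, hh ⟨y, hy⟩, Nat.cast_inj] at hxy
    exact congrArg Subtype.val (hinj hxy)
  · rintro _ ⟨j, hj, rfl⟩
    obtain ⟨x, hx⟩ := (hrange _).2 ⟨⟨j, hj⟩, rfl⟩
    exact ⟨x, x.2, by rw [hh, hx, Nat.cast_mul, mul_comm]⟩

theorem ncard_setOf_ht_eq {Λ : Set (ι → UnitAddCircle)} {h : Λ → ℕ}
    (hh : ∀ x : Λ, ht (x : ι → UnitAddCircle) = h x) (n : ℕ) :
    {x | x ∈ Λ ∧ ht x = n}.ncard = (h ⁻¹' {n}).ncard := by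
  rw [← Set.ncard_image_of_injective _ Subtype.val_injective]
  congr 1
  ext x
  simp only [Set.mem_image, Set.mem_preimage, Set.mem_singleton_iff, Subtype.exists,
    exists_and_right, exists_eq_right]
  constructor
  · rintro ⟨hx, hxn⟩
    exact ⟨hx, mod_cast (hh ⟨x, hx⟩).symm.trans hxn⟩
  · rintro ⟨hx, rfl⟩
    exact ⟨hx, hh ⟨x, hx⟩⟩

theorem exists_sSup_ht_eq [Nonempty ι] {Λ : Set (ι → UnitAddCircle)} [Finite Λ]
    (hne : Λ.Nonempty) {h : Λ → ℕ} (hh : ∀ x : Λ, ht (x : ι → UnitAddCircle) = h x) :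
    ∃ s : ℕ, sSup (ht '' Λ) = s ∧ (∀ x, h x ≤ s) ∧ s < Fintype.card ι := by
  obtain ⟨⟨x, hx, hxs⟩, hub⟩ := (Λ.toFinite.image ht).isCompact.isGreatest_sSup (hne.image ht)
  rw [← hxs, hh ⟨x, hx⟩] at hub
  refine ⟨h ⟨x, hx⟩, by rw [← hxs, hh ⟨x, hx⟩], fun y => ?_, ?_⟩
  · exact_mod_cast hh y ▸ hub ⟨y, y.2, rfl⟩
  · exact_mod_cast hh ⟨x, hx⟩ ▸ ht_lt_card x

variable {Λ : AddSubgroup (ι → UnitAddCircle)}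

theorem exists_hasDeltaPoly_card [Nonempty ι] [Finite Λ]
    (hsupp : ∀ x ∈ Λ, x ≠ 0 → ∀ i, x i ≠ 0) (hint : ∀ x ∈ Λ, ∃ z : ℤ, ht x = z)
    (hsym : ∀ i : ℤ, {x | x ∈ Λ ∧ ht x = i}.ncard =
      {x | x ∈ Λ ∧ ht x = sSup (ht '' (Λ : Set (ι → UnitAddCircle))) - i}.ncard) :
    ∃ r : ℕ, 0 < r ∧ Fintype.card ι = r * Nat.card Λ ∧
      HasDeltaPoly (Nat.card Λ) r (Λ : Set (ι → UnitAddCircle)) := by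
  cases nonempty_fintype Λ
  obtain ⟨h, hh⟩ : ∃ h : Λ → ℕ, ∀ x : Λ, ht (x : ι → UnitAddCircle) = h x :=
    exists_nat_ht_eq hint
  obtain ⟨s, hsSup, hle, hs⟩ := exists_sSup_ht_eq ⟨0, zero_mem Λ⟩ hh
  have hr : 0 < Fintype.card ι - s := Nat.sub_pos_of_lt hs
  have hzero : h 0 = 0 := by
    have := hh 0
    rw [AddSubgroup.coe_zero, ht_zero] at this
    exact_mod_cast this.symm
  have hneg : ∀ x ≠ 0, h (-x) + h x = Fintype.card ι := by
    intro x hx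
    have := ht_neg (hsupp x x.2 (Subtype.coe_ne_coe.2 hx))
    rw [← AddSubgroup.coe_neg, hh, hh, eq_sub_iff_add_eq] at this
    exact_mod_cast this
  have hreflect : ∀ n ≤ s, (h ⁻¹' {n}).ncard = (h ⁻¹' {s - n}).ncard := by
    intro n hn
    have := hsym n
    rw [hsSup, Int.cast_natCast, ← Nat.cast_sub hn] at this
    exact (ncard_setOf_ht_eq hh n).symm.trans (this.trans (ncard_setOf_ht_eq hh (s - n)))
  obtain ⟨hcard, hgen⟩ := generatingPoly_eq_arithmetic_progression hzero hneg hle hs hreflect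
  rw [Nat.card_eq_fintype_card]
  exact ⟨_, hr, hcard, hasDeltaPoly_of_generatingPoly_eq hh hr hgen⟩

end HeightDistribution

section Generator

variable {ι : Type*}

theorem addOrderOf_const [Nonempty ι] {M : Type*} [AddMonoid M] (a : M) :
    addOrderOf (fun _ : ι => a) = addOrderOf a :=
  addOrderOf_injective (Pi.constAddMonoidHom ι M) Function.const_injective a

variable {Λ : AddSubgroup (ι → UnitAddCircle)}

theorem eq_zmultiples_const_one_div_card [Nonempty ι] [Finite Λ]
    (hmem : (fun _ => ((1 / (Nat.card Λ : ℝ) : ℝ) : UnitAddCircle)) ∈ Λ) :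
    Λ = AddSubgroup.zmultiples fun _ => ((1 / (Nat.card Λ : ℝ) : ℝ) : UnitAddCircle) := by
  refine (AddSubgroup.eq_of_le_of_card_ge (AddSubgroup.zmultiples_le_of_mem hmem) ?_).symm
  rw [Nat.card_zmultiples, addOrderOf_const, AddCircle.addOrderOf_period_div Nat.card_pos]

theorem const_one_div_card_mem [Fintype ι] [Finite Λ]
    (hsupp : ∀ x ∈ Λ, x ≠ 0 → ∀ i, x i ≠ 0) {r : ℕ} (hr : 0 < r)
    (hcard : Fintype.card ι = r * Nat.card Λ)
    (hδ : HasDeltaPoly (Nat.card Λ) r (Λ : Set (ι → UnitAddCircle))) :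
    (fun _ => ((1 / (Nat.card Λ : ℝ) : ℝ) : UnitAddCircle)) ∈ Λ := by
  have hpos : 0 < Nat.card Λ := Nat.card_pos
  rcases (Nat.succ_le_of_lt hpos).eq_or_lt with hone | hone
  · rw [← hone, Nat.cast_one, div_one, AddCircle.coe_period]
    exact zero_mem Λ
  obtain ⟨x, hx, hxr⟩ := hδ.surjOn ⟨1, hone, rfl⟩
  rw [Nat.cast_one, one_mul] at hxr
  have hx0 : x ≠ 0 := by
    rintro rfl
    rw [ht_zero] at hxr
    exact hr.ne (mod_cast hxr)
  have hnx : Nat.card Λ • x = 0 := congrArg Subtype.val (card_nsmul_eq_zero' (x := (⟨x, hx⟩ : Λ)))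
  rw [← eq_const_of_nsmul_eq_zero_of_ht_eq hpos (hsupp x hx hx0) hnx ?_]
  · exact hx
  · rw [hxr, hcard, Nat.cast_mul, mul_div_cancel_right₀ _ (by exact_mod_cast hpos.ne')]

end Generator

theorem NonPyramidal.apply_ne_zero {ι : Type*} [Fintype ι]
    {Λ : AddSubgroup (ι → UnitAddCircle)} (hnp : NonPyramidal (Λ : Set (ι → UnitAddCircle)))
    (hprime : (Nat.card Λ).Prime) {x : ι → UnitAddCircle}
    (hx : x ∈ Λ) (hx0 : x ≠ 0) (i : ι) : x i ≠ 0 := by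
  have := Fact.mk hprime
  intro hxi
  obtain ⟨y, hy, hyi⟩ := hnp i
  obtain ⟨k, hk⟩ := AddSubgroup.mem_zmultiples_iff.1 (mem_zmultiples_of_prime_card rfl
    (g := (⟨x, hx⟩ : Λ)) (g' := ⟨y, hy⟩) fun h => hx0 (congrArg Subtype.val h))
  have hkx : k • x = y := congrArg Subtype.val hk
  exact hyi (by rw [← hkx, Pi.smul_apply, hxi, smul_zero])

theorem stmt_6_general {ι : Type*} [Fintype ι] [Nonempty ι]
    (Λ : AddSubgroup (ι → UnitAddCircle)) [Finite Λ]
    (hsupp : ∀ x ∈ Λ, x ≠ 0 → ∀ i, x i ≠ 0) (hint : ∀ x ∈ Λ, ∃ z : ℤ, ht x = z)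
    (hsym : ∀ i : ℤ, {x | x ∈ Λ ∧ ht x = i}.ncard =
      {x | x ∈ Λ ∧ ht x = sSup (ht '' (Λ : Set (ι → UnitAddCircle))) - i}.ncard) :
    Nat.card Λ ∣ Fintype.card ι ∧
    Λ = AddSubgroup.zmultiples (fun _ => ((1 / (Nat.card Λ : ℝ) : ℝ) : UnitAddCircle)) ∧
    HasDeltaPoly (Nat.card Λ) (Fintype.card ι / Nat.card Λ) (Λ : Set (ι → UnitAddCircle)) := by
  obtain ⟨r, hr, hcard, hδ⟩ := exists_hasDeltaPoly_card hsupp hint hsym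
  refine ⟨⟨r, hcard.trans (mul_comm _ _)⟩, ?_, ?_⟩
  · exact eq_zmultiples_const_one_div_card (const_one_div_card_mem hsupp hr hcard hδ)
  · rwa [hcard, Nat.mul_div_cancel r Nat.card_pos]

theorem stmt_6 (p d : ℕ) (hp : p.Prime)
    (Λ : AddSubgroup (Fin (d+1) → AddCircle (1:ℝ)))
    (hcard : Nat.card Λ = p)
    (hint : ∀ x ∈ Λ, ∃ z : ℤ, ht x = (z : ℝ))
    (hnp : NonPyramidal (Λ : Set (Fin (d+1) → AddCircle (1:ℝ))))
    (hsym : ∀ i : ℤ,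
      Set.ncard {x : Fin (d+1) → AddCircle (1:ℝ) | x ∈ Λ ∧ ht x = (i : ℝ)} =
      Set.ncard {x : Fin (d+1) → AddCircle (1:ℝ) | x ∈ Λ ∧
        ht x = sSup (ht '' (Λ : Set (Fin (d+1) → AddCircle (1:ℝ)))) - (i : ℝ)}) :
    p ∣ (d+1) ∧
    Λ = AddSubgroup.zmultiples
      (fun _ : Fin (d+1) => ((1 / (p:ℝ) : ℝ) : AddCircle (1:ℝ))) ∧
    HasDeltaPoly p ((d+1)/p) (Λ : Set (Fin (d+1) → AddCircle (1:ℝ))) := by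
  subst hcard
  have : Finite Λ := Nat.finite_of_card_ne_zero hp.ne_zero
  simpa only [Fintype.card_fin] using
    stmt_6_general Λ (fun x => hnp.apply_ne_zero hp) hint hsym
end

section
/- Let v ≥ 2 and t ≥ 1 be integers and let 1 < v₁ < v₂ < ⋯ < v_t = v be integers with v_i dividing v_{i+1} for 1 ≤ i ≤ t−1; set v₀ = 1. Let s₁, …, s_t be positive integers, set d + 1 = s₁ + ⋯ + s_t, and let Λ be the cyclic subgroup of (ℝ/ℤ)^{d+1} generated by the element whose coordinates in the i-th consecutive block of size s_i all equal 1/v_i (for i = 1, …, t). Then, for a nonnegative integer k, Λ has δ-polynomial 1 + t^{k+1} + t^{2(k+1)} + ⋯ + t^{(v−1)(k+1)} if and only if s_i = (v/v_{i−1} − v/v_{i+1})(k+1) for every 1 ≤ i ≤ t−1 and s_t = (v/v_{t−1})(k+1). -/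
open scoped BigOperators

/-!
Write `M i = v / w (i + 1)`. Every `n < v` has mixed radix digits with place values
`w 0 ∣ w 1 ∣ ⋯ ∣ w t = v`, and the height of `n • g` is additive in these digits; rescale it by
`k + 1` and call the result `f`. If `f (w i) = M i` for all `i`, then `f` merely reverses the order
of the digits, hence permutes `0, …, v - 1`.

Conversely let `f` be a bijection onto `0, …, v - 1`. By descending induction on `i`, the multiples
of `w (i + 1)` take precisely the values `0, …, M i - 1`. The value `M i` must then be taken at some
`w j` with `j ≤ i`. As the block sizes are positive, `f (w i) / w i` is strictly decreasing in `i`;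
if `j < i`, this gives `f (w (j + 1)) = q * M i + r` with `r < M i` and `q * w j < w (j + 1)`, and
that value would also be taken at `q * w j + b` for some multiple `b` of `w (i + 1)`.

Finally `f (w i) / w i - f (w (i + 1)) / w (i + 1)` is the `i`-th rescaled block size over
`w (i + 1)`, so the values `f (w i)` and the block sizes determine each other.
-/

theorem add_lt_of_lt_of_dvd {a b c m : ℕ} (ha : a < m) (hb : m ∣ b) (hc : m ∣ c) (hbc : b < c) :
    a + b < c := by
  obtain ⟨b, rfl⟩ := hb
  obtain ⟨c, rfl⟩ := hc
  calc a + m * b < m + m * b := by gcongr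
    _ = m * (b + 1) := by ring
    _ ≤ m * c := Nat.mul_le_mul_left m (Nat.lt_of_mul_lt_mul_left hbc)

theorem add_mod_of_lt_of_dvd {a b c m : ℕ} (ha : a < m) (hb : m ∣ b) (hc : m ∣ c) (hc0 : 0 < c) :
    (a + b) % c = a % c + b % c := by
  refine Nat.add_mod_of_add_mod_lt ((Nat.add_le_add_right (Nat.mod_le a c) _).trans_lt ?_)
  exact add_lt_of_lt_of_dvd ha ((Nat.dvd_mod_iff hc).2 hb) hc (Nat.mod_lt b hc0)

theorem bijOn_injective_comp_image_iff {α β γ : Type*} {f : α → β} {g : β → γ}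
    (hg : Function.Injective g) {s : Set α} {u : Set β} :
    Set.BijOn (g ∘ f) s (g '' u) ↔ Set.BijOn f s u := by
  refine ⟨fun h => ⟨fun a ha => hg.mem_set_image.1 (h.mapsTo ha), h.injOn.of_comp, fun y hy => ?_⟩,
    hg.bijOn_image.comp⟩
  obtain ⟨a, ha, hay⟩ := h.surjOn (Set.mem_image_of_mem g hy)
  exact ⟨a, ha, hg hay⟩

variable {t : ℕ}

theorem exists_castSucc_and_not_succ {P : Fin (t + 1) → Prop} (h0 : P 0) {k : Fin (t + 1)}
    (hk : ¬ P k) : ∃ j : Fin t, j.succ ≤ k ∧ P j.castSucc ∧ ¬ P j.succ := by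
  induction k using Fin.induction with
  | zero => exact absurd h0 hk
  | succ i ih =>
    by_cases hi : P i.castSucc
    · exact ⟨i, le_rfl, hi, hk⟩
    · obtain ⟨j, hji, hj⟩ := ih hi
      exact ⟨j, hji.trans i.castSucc_lt_succ.le, hj⟩

/-- The place values `1 = w 0 ∣ w 1 ∣ ⋯ ∣ w t`, strictly increasing, of a mixed radix numeral
system for the natural numbers below `w t`. -/
structure IsDivisorChain (w : Fin (t + 1) → ℕ) : Prop where
  zero_eq_one : w 0 = 1
  strictMono : StrictMono w
  castSucc_dvd_succ : ∀ i : Fin t, w i.castSucc ∣ w i.succ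

namespace IsDivisorChain

variable {w : Fin (t + 1) → ℕ} (hw : IsDivisorChain w)
include hw

theorem pos (i : Fin (t + 1)) : 0 < w i :=
  calc 0 < w 0 := by simp [hw.zero_eq_one]
    _ ≤ w i := hw.strictMono.monotone (Fin.zero_le i)

theorem dvd_of_le {i j : Fin (t + 1)} (h : i ≤ j) : w i ∣ w j := by
  rcases h.eq_or_lt with rfl | h
  · exact dvd_rfl
  · exact (Fin.liftFun_iff_succ (· ∣ ·)).2 hw.castSucc_dvd_succ h

theorem dvd_last (i : Fin (t + 1)) : w i ∣ w (Fin.last t) :=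
  hw.dvd_of_le (Fin.le_last i)

theorem cast_last_div {K : Type*} [DivisionRing K] [CharZero K] (i : Fin (t + 1)) :
    ((w (Fin.last t) / w i : ℕ) : K) = w (Fin.last t) / w i :=
  Nat.cast_div (hw.dvd_last i) (Nat.cast_ne_zero.2 (hw.pos i).ne')

theorem digit_add_mod {q b : ℕ} {i : Fin t} (hq : q * w i.castSucc < w i.succ)
    (hb : w i.succ ∣ b) (l : Fin t) :
    (q * w i.castSucc + b) % w l.succ = q * (w i.castSucc % w l.succ) + b % w l.succ := by
  rcases lt_or_ge l i with h | h
  · have hi : w l.succ ∣ w i.castSucc := hw.dvd_of_le h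
    have hb' : w l.succ ∣ b := (hi.trans (hw.castSucc_dvd_succ i)).trans hb
    rw [Nat.mod_eq_zero_of_dvd hi, Nat.mod_eq_zero_of_dvd hb',
      Nat.mod_eq_zero_of_dvd ((hi.mul_left q).add hb'), mul_zero]
  · have hil : i.succ ≤ l.succ := Fin.succ_le_succ_iff.2 h
    have hle : w i.succ ≤ w l.succ := hw.strictMono.monotone hil
    rw [add_mod_of_lt_of_dvd hq hb (hw.dvd_of_le hil) (hw.pos _),
      Nat.mod_eq_of_lt (hq.trans_le hle),
      Nat.mod_eq_of_lt ((hw.strictMono i.castSucc_lt_succ).trans_le hle)]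

end IsDivisorChain

section PlaceMultiples

variable {w : Fin (t + 1) → ℕ}

/-- The multiples of the place value `w i` below `w t`, that is, the numbers whose digits in the
places before `i` vanish. -/
def placeMultiples (w : Fin (t + 1) → ℕ) (i : Fin (t + 1)) : Set ℕ :=
  {n | n < w (Fin.last t) ∧ w i ∣ n}

theorem placeMultiples_zero (hw : IsDivisorChain w) :
    placeMultiples w 0 = Set.Iio (w (Fin.last t)) := by
  ext n
  simp [placeMultiples, hw.zero_eq_one]

theorem placeMultiples_last (hw : IsDivisorChain w) : placeMultiples w (Fin.last t) = {0} := by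
  ext n
  refine ⟨fun h => Nat.eq_zero_of_dvd_of_lt h.2 h.1, ?_⟩
  rintro rfl
  exact ⟨hw.pos _, dvd_zero _⟩

theorem exists_digit_add_of_mem_placeMultiples (hw : IsDivisorChain w) (i : Fin t) {n : ℕ}
    (hn : n ∈ placeMultiples w i.castSucc) :
    ∃ q b, q * w i.castSucc < w i.succ ∧ b ∈ placeMultiples w i.succ ∧
      q * w i.castSucc + b = n := by
  obtain ⟨q, hq⟩ : w i.castSucc ∣ n % w i.succ :=
    (Nat.dvd_mod_iff (hw.castSucc_dvd_succ i)).2 hn.2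
  rw [mul_comm] at hq
  refine ⟨q, w i.succ * (n / w i.succ), hq ▸ Nat.mod_lt n (hw.pos _),
    ⟨(Nat.mul_div_le _ _).trans_lt hn.1, dvd_mul_right _ _⟩, ?_⟩
  rw [← hq, Nat.mod_add_div]

theorem digit_add_mem_placeMultiples (hw : IsDivisorChain w) {i j : Fin t} (hij : i ≤ j)
    {q b : ℕ} (hq : q * w i.castSucc < w i.succ) (hb : b ∈ placeMultiples w j.succ) :
    q * w i.castSucc + b ∈ placeMultiples w i.castSucc := by
  have hdvd : w i.succ ∣ b := (hw.dvd_of_le (Fin.succ_le_succ_iff.2 hij)).trans hb.2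
  exact ⟨add_lt_of_lt_of_dvd hq hdvd (hw.dvd_last _) hb.1,
    (dvd_mul_left _ _).add ((hw.castSucc_dvd_succ i).trans hdvd)⟩

theorem digit_mul_add_lt_div_iff (hw : IsDivisorChain w) (i : Fin t) {q r : ℕ}
    (hr : r < w (Fin.last t) / w i.succ) :
    q * (w (Fin.last t) / w i.succ) + r < w (Fin.last t) / w i.castSucc ↔
      q * w i.castSucc < w i.succ := by
  obtain ⟨m, hm⟩ := hw.castSucc_dvd_succ i
  obtain ⟨M, hM⟩ := hw.dvd_last i.succ
  have hM0 : 0 < M := Nat.pos_of_mul_pos_left (hM ▸ hw.pos (Fin.last t))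
  have hsucc : w (Fin.last t) / w i.succ = M := by rw [hM, Nat.mul_div_cancel_left _ (hw.pos _)]
  have hcast : w (Fin.last t) / w i.castSucc = m * M := by
    rw [hM, hm, mul_assoc, Nat.mul_div_cancel_left _ (hw.pos _)]
  rw [hsucc] at hr ⊢
  rw [hcast, hm, mul_comm (w _) m, Nat.mul_lt_mul_right (hw.pos _), ← Nat.div_lt_iff_lt_mul hM0,
    mul_comm q, Nat.mul_add_div hM0, Nat.div_eq_of_lt hr, add_zero]

end PlaceMultiples

/-- `f` is additive in the digits of the mixed radix numeral system with place values `w`: a digit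
`q` in place `i` contributes `q * f (w i)`, and can be split off from the higher places. -/
structure IsDigitAdditive {R : Type*} [Semiring R] (w : Fin (t + 1) → ℕ) (f : ℕ → R) : Prop where
  map_zero : f 0 = 0
  map_digit_add : ∀ {i : Fin t} {q b : ℕ}, q * w i.castSucc < w i.succ → w i.succ ∣ b →
    f (q * w i.castSucc + b) = q * f (w i.castSucc) + f b

/-- `f` maps the multiples of `w i` below `w t` bijectively onto the first `w t / w i` natural
numbers. -/
def MultiplesFill {R : Type*} [NatCast R] (w : Fin (t + 1) → ℕ) (f : ℕ → R) (i : Fin (t + 1)) :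
    Prop :=
  Set.BijOn f (placeMultiples w i) (Nat.cast '' Set.Iio (w (Fin.last t) / w i))

section MultiplesFill

variable {R : Type*} [Semiring R] {w : Fin (t + 1) → ℕ} {f : ℕ → R}

theorem multiplesFill_zero_iff (hw : IsDivisorChain w) :
    MultiplesFill w f 0 ↔
      Set.BijOn f (Set.Iio (w (Fin.last t))) (Nat.cast '' Set.Iio (w (Fin.last t))) := by
  rw [MultiplesFill, placeMultiples_zero hw, hw.zero_eq_one, Nat.div_one]

theorem multiplesFill_last (hw : IsDivisorChain w) (h0 : f 0 = 0) :
    MultiplesFill w f (Fin.last t) := by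
  rw [MultiplesFill, placeMultiples_last hw, Nat.div_self (hw.pos _)]
  simp [h0]

theorem MultiplesFill.castSucc [CharZero R] (hw : IsDivisorChain w) (hf : IsDigitAdditive w f)
    {i : Fin t} (hi : f (w i.castSucc) = (w (Fin.last t) / w i.succ : ℕ))
    (h : MultiplesFill w f i.succ) : MultiplesFill w f i.castSucc := by
  have hdigit {q r : ℕ} := digit_mul_add_lt_div_iff (q := q) (r := r) hw i
  unfold MultiplesFill at h ⊢
  set M := w (Fin.last t) / w i.succ
  have hM0 : 0 < M := Nat.div_pos (Nat.le_of_dvd (hw.pos _) (hw.dvd_last _)) (hw.pos _)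
  have hval {q b r : ℕ} (hq : q * w i.castSucc < w i.succ) (hb : b ∈ placeMultiples w i.succ)
      (hr : r = f b) : f (q * w i.castSucc + b) = (q * M + r : ℕ) := by
    rw [hf.map_digit_add hq hb.2, hi, ← hr]
    push_cast
    rfl
  refine ⟨fun n hn => ?_, fun n hn n' hn' hnn' => ?_, ?_⟩
  · obtain ⟨q, b, hq, hb, rfl⟩ := exists_digit_add_of_mem_placeMultiples hw i hn
    obtain ⟨r, hr, hrb⟩ := h.mapsTo hb
    exact ⟨q * M + r, (hdigit hr).2 hq, (hval hq hb hrb).symm⟩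
  · obtain ⟨q, b, hq, hb, rfl⟩ := exists_digit_add_of_mem_placeMultiples hw i hn
    obtain ⟨q', b', hq', hb', rfl⟩ := exists_digit_add_of_mem_placeMultiples hw i hn'
    obtain ⟨r, hr, hrb⟩ := h.mapsTo hb
    obtain ⟨r', hr', hrb'⟩ := h.mapsTo hb'
    rw [hval hq hb hrb, hval hq' hb' hrb', Nat.cast_inj] at hnn'
    have hqq' : q = q' := by
      simpa [mul_comm _ M, Nat.mul_add_div hM0, Nat.div_eq_of_lt hr, Nat.div_eq_of_lt hr'] using
        congrArg (· / M) hnn'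
    subst hqq'
    have hrr' : r = r' := Nat.add_left_cancel hnn'
    rw [h.injOn hb hb' (by rw [← hrb, ← hrb', hrr'])]
  · rintro _ ⟨r, hr, rfl⟩
    obtain ⟨b, hb, hbr⟩ := h.surjOn (Set.mem_image_of_mem _ (Nat.mod_lt r hM0))
    have hq : r / M * w i.castSucc < w i.succ :=
      (hdigit (Nat.mod_lt r hM0)).1 ((Nat.div_add_mod' r M).symm ▸ hr)
    refine ⟨r / M * w i.castSucc + b, digit_add_mem_placeMultiples hw le_rfl hq hb, ?_⟩
    rw [hval hq hb hbr.symm, Nat.div_add_mod']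

theorem MultiplesFill.dvd_iff_lt_div [CharZero R] (hw : IsDivisorChain w)
    (h0 : MultiplesFill w f 0) {i : Fin (t + 1)} (h : MultiplesFill w f i) {n c : ℕ}
    (hn : n < w (Fin.last t)) (hc : f n = c) : w i ∣ n ↔ c < w (Fin.last t) / w i := by
  rw [multiplesFill_zero_iff hw] at h0
  refine ⟨fun hdvd => ?_, fun hlt => ?_⟩
  · obtain ⟨r, hr, hrn⟩ := h.mapsTo ⟨hn, hdvd⟩
    exact Nat.cast_injective (hrn.trans hc) ▸ hr
  · obtain ⟨b, hb, hbc⟩ := h.surjOn (Set.mem_image_of_mem _ hlt)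
    exact h0.injOn hb.1 hn (hbc.trans hc.symm) ▸ hb.2

theorem MultiplesFill.exists_eq_div [CharZero R] (hw : IsDivisorChain w) (hf : IsDigitAdditive w f)
    (h0 : MultiplesFill w f 0) {i : Fin t} (h : MultiplesFill w f i.succ) :
    ∃ j ≤ i, f (w j.castSucc) = (w (Fin.last t) / w i.succ : ℕ) := by
  have dvd_iff {n c : ℕ} := h0.dvd_iff_lt_div (n := n) (c := c) hw h
  rw [multiplesFill_zero_iff hw] at h0
  set M := w (Fin.last t) / w i.succ
  have hM : M < w (Fin.last t) := Nat.div_lt_self (hw.pos _)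
    (hw.zero_eq_one ▸ hw.strictMono i.succ_pos)
  obtain ⟨n, hn, hnM⟩ := h0.surjOn (Set.mem_image_of_mem _ hM)
  have hni : ¬ w i.succ ∣ n := fun hdvd => ((dvd_iff hn hnM).1 hdvd).false
  obtain ⟨j, hji, hjn, hjn'⟩ :=
    exists_castSucc_and_not_succ (P := (w · ∣ n)) (by simp [hw.zero_eq_one]) hni
  rw [Fin.succ_le_succ_iff] at hji
  have hlast : w j.castSucc < w (Fin.last t) := hw.strictMono (Fin.castSucc_lt_last j)
  obtain ⟨q, b, hq, hb, rfl⟩ := exists_digit_add_of_mem_placeMultiples hw j ⟨hn, hjn⟩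
  obtain ⟨c, -, hc⟩ := h0.mapsTo hlast
  obtain ⟨r, -, hr⟩ := h0.mapsTo hb.1
  have hsum : q * c + r = M := by
    rw [hf.map_digit_add hq hb.2, ← hc, ← hr] at hnM
    exact_mod_cast hnM
  have hMc : M ≤ c := by
    by_contra! hcM
    have hdvd : w i.succ ∣ w j.castSucc := (dvd_iff hlast hc.symm).2 hcM
    exact (Nat.le_of_dvd (hw.pos _) hdvd).not_gt (hw.strictMono (Fin.castSucc_lt_succ_iff.2 hji))
  have hq0 : 0 < q := Nat.pos_of_ne_zero fun hq0 => hjn' (by simpa [hq0] using hb.2)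
  refine ⟨j, hji, ?_⟩
  have hcM : c ≤ M :=
    calc c ≤ q * c := Nat.le_mul_of_pos_left c hq0
      _ ≤ q * c + r := Nat.le_add_right _ r
      _ = M := hsum
  rw [← hc, hcM.antisymm hMc]

end MultiplesFill

section Uniqueness

variable {R : Type*} [Semiring R] [PartialOrder R] [IsStrictOrderedRing R]
  {w : Fin (t + 1) → ℕ} {f : ℕ → R} {i : Fin t}

theorem MultiplesFill.le_of_lt_of_eq_div (hw : IsDivisorChain w) (hf : IsDigitAdditive w f)
    (h0 : MultiplesFill w f 0) (h : MultiplesFill w f i.succ) {j : Fin t} (hji : j < i)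
    (hj : f (w j.castSucc) = (w (Fin.last t) / w i.succ : ℕ)) :
    f (w j.castSucc) * w j.succ ≤ f (w j.succ) * w j.castSucc := by
  rw [multiplesFill_zero_iff hw] at h0
  unfold MultiplesFill at h
  set M := w (Fin.last t) / w i.succ
  have hM0 : 0 < M := Nat.div_pos (Nat.le_of_dvd (hw.pos _) (hw.dvd_last _)) (hw.pos _)
  have hjlast : w j.succ < w (Fin.last t) :=
    hw.strictMono ((Fin.succ_lt_succ_iff.2 hji).trans_le (Fin.le_last _))
  obtain ⟨c, -, hc⟩ := h0.mapsTo hjlast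
  rw [hj, ← hc]
  norm_cast
  by_contra! hcM
  obtain ⟨b, hb, hbc⟩ := h.surjOn (Set.mem_image_of_mem _ (Nat.mod_lt c hM0))
  have hq : c / M * w j.castSucc < w j.succ := by
    refine Nat.lt_of_mul_lt_mul_left (a := M) (lt_of_le_of_lt ?_ hcM)
    rw [← mul_assoc]
    exact Nat.mul_le_mul_right _ (Nat.mul_div_le c M)
  have hbj : w j.succ ∣ b := (hw.dvd_of_le (Fin.succ_le_succ_iff.2 hji.le)).trans hb.2
  have hval : f (c / M * w j.castSucc + b) = f (w j.succ) := by
    rw [hf.map_digit_add hq hbj, hj, hbc, ← hc]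
    exact_mod_cast Nat.div_add_mod' c M
  have heq : c / M * w j.castSucc + b = w j.succ :=
    h0.injOn (digit_add_mem_placeMultiples hw hji.le hq hb).1 hjlast hval
  have hb0 : b = 0 := Nat.eq_zero_of_dvd_of_lt hb.2
    ((Nat.le_add_left b _).trans_lt (heq ▸ hw.strictMono (Fin.succ_lt_succ_iff.2 hji)))
  omega

theorem bijOn_Iio_iff_forall_eq_div (hw : IsDivisorChain w) (hf : IsDigitAdditive w f)
    (hlt : ∀ i : Fin t, f (w i.succ) * w i.castSucc < f (w i.castSucc) * w i.succ) :
    Set.BijOn f (Set.Iio (w (Fin.last t))) (Nat.cast '' Set.Iio (w (Fin.last t))) ↔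
      ∀ i : Fin t, f (w i.castSucc) = (w (Fin.last t) / w i.succ : ℕ) := by
  rw [← multiplesFill_zero_iff hw]
  refine ⟨fun h0 => ?_, fun h => ?_⟩
  · have eq_div {i : Fin t} (h : MultiplesFill w f i.succ) :
        f (w i.castSucc) = (w (Fin.last t) / w i.succ : ℕ) := by
      obtain ⟨j, hji, hj⟩ := h0.exists_eq_div hw hf h
      rcases hji.eq_or_lt with rfl | hji
      · exact hj
      · exact absurd (hlt j) (h0.le_of_lt_of_eq_div hw hf h hji hj).not_gt
    have fill (i : Fin (t + 1)) : MultiplesFill w f i := by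
      induction i using Fin.reverseInduction with
      | last => exact multiplesFill_last hw hf.map_zero
      | cast i ih => exact ih.castSucc hw hf (eq_div ih)
    exact fun i => eq_div (fill i.succ)
  · refine Fin.reverseInduction (motive := MultiplesFill w f) ?_ (fun i ih => ?_) 0
    · exact multiplesFill_last hw hf.map_zero
    · exact ih.castSucc hw hf (h i)

end Uniqueness

section FractSum

variable {K : Type*} [Field K] {w : Fin (t + 1) → ℕ} {x : Fin t → K}

/-- The weighted sum `∑ b, x b * {n / w (b + 1)}` of fractional parts: the height of the `n`-th
multiple of the generator when `x b` is the size of block `b`. -/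
def fractSum (w : Fin (t + 1) → ℕ) (x : Fin t → K) (n : ℕ) : K :=
  ∑ b, x b * ((n % w b.succ : ℕ) / w b.succ)

theorem fractSum_last (hw : IsDivisorChain w) : fractSum w x (w (Fin.last t)) = 0 :=
  Finset.sum_eq_zero fun b _ => by
    rw [Nat.mod_eq_zero_of_dvd (hw.dvd_last _), Nat.cast_zero, zero_div, mul_zero]

theorem isDigitAdditive_fractSum (hw : IsDivisorChain w) : IsDigitAdditive w (fractSum w x) where
  map_zero := by simp [fractSum]
  map_digit_add hq hb := by
    simp only [fractSum, Finset.mul_sum, ← Finset.sum_add_distrib, hw.digit_add_mod hq hb]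
    refine Finset.sum_congr rfl fun l _ => ?_
    push_cast
    ring

theorem fractSum_castSucc_div_sub [CharZero K] (hw : IsDivisorChain w) (i : Fin t) :
    fractSum w x (w i.castSucc) / w i.castSucc - fractSum w x (w i.succ) / w i.succ =
      x i / w i.succ := by
  have hne (j : Fin (t + 1)) : (w j : K) ≠ 0 := Nat.cast_ne_zero.2 (hw.pos j).ne'
  simp only [fractSum, Finset.sum_div, ← Finset.sum_sub_distrib]
  rw [Finset.sum_eq_single_of_mem i (Finset.mem_univ i) fun l _ hli => ?_]
  · rw [Nat.mod_self, Nat.mod_eq_of_lt (hw.strictMono i.castSucc_lt_succ), Nat.cast_zero, zero_div,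
      mul_zero, zero_div, sub_zero]
    have := hne i.castSucc
    field_simp
  · rcases hli.lt_or_gt with h | h
    · rw [Nat.mod_eq_zero_of_dvd (hw.dvd_of_le (Fin.succ_le_castSucc_iff.2 h)),
        Nat.mod_eq_zero_of_dvd (hw.dvd_of_le (Fin.succ_le_succ_iff.2 h.le))]
      simp
    · rw [Nat.mod_eq_of_lt (hw.strictMono (Fin.castSucc_lt_succ_iff.2 h.le)),
        Nat.mod_eq_of_lt (hw.strictMono (Fin.succ_lt_succ_iff.2 h))]
      have := hne i.castSucc
      have := hne i.succ
      field_simp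
      ring

/-- The quotients `w t / w (i + 1)`, with the convention that `w t / w (t + 1) = 0`. -/
def succQuotient (w : Fin (t + 1) → ℕ) (i : Fin (t + 1)) : ℕ :=
  if h : (i : ℕ) < t then w (Fin.last t) / w (Fin.succ ⟨i, h⟩) else 0

theorem succQuotient_castSucc (w : Fin (t + 1) → ℕ) (i : Fin t) :
    succQuotient w i.castSucc = w (Fin.last t) / w i.succ :=
  dif_pos i.isLt

theorem succQuotient_last (w : Fin (t + 1) → ℕ) : succQuotient w (Fin.last t) = 0 :=
  dif_neg (lt_irrefl t)

theorem forall_succQuotient_succ_iff (w : Fin (t + 1) → ℕ) (ht0 : 0 < t) {P : Fin t → ℕ → Prop} :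
    (∀ b, P b (succQuotient w b.succ)) ↔
      (∀ b : Fin t, ∀ h : (b : ℕ) + 2 ≤ t, P b (w (Fin.last t) / w ⟨b + 2, by omega⟩)) ∧
        P ⟨t - 1, by omega⟩ 0 := by
  have hinit (b : Fin t) (h : (b : ℕ) + 2 ≤ t) :
      succQuotient w b.succ = w (Fin.last t) / w ⟨b + 2, by omega⟩ :=
    dif_pos (show (b.succ : ℕ) < t from h)
  have hlast {b : Fin t} (h : (b : ℕ) + 1 = t) : succQuotient w b.succ = 0 :=
    dif_neg (show ¬ (b.succ : ℕ) < t from h.not_lt)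
  refine ⟨fun h => ⟨fun b hb => hinit b hb ▸ h b, ?_⟩, fun ⟨h, h'⟩ b => ?_⟩
  · exact hlast (b := ⟨t - 1, by omega⟩) (Nat.sub_add_cancel ht0) ▸ h ⟨t - 1, by omega⟩
  · rcases lt_or_eq_of_le (Nat.succ_le_of_lt b.isLt) with hb | hb
    · exact hinit b hb ▸ h b hb
    · have hb' : b = ⟨t - 1, by omega⟩ := Fin.ext (by simp [← hb])
      rw [hlast hb, hb']
      exact h'

theorem succQuotient_le_div (hw : IsDivisorChain w) (i : Fin (t + 1)) :
    succQuotient w i ≤ w (Fin.last t) / w i := by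
  induction i using Fin.lastCases with
  | last => exact succQuotient_last w ▸ Nat.zero_le _
  | cast i =>
    rw [succQuotient_castSucc]
    exact Nat.div_le_div_left (hw.strictMono i.castSucc_lt_succ).le (hw.pos _)

theorem fractSum_castSucc_eq_succQuotient_iff [CharZero K] (hw : IsDivisorChain w) {i : Fin t}
    (hi : fractSum w x (w i.succ) = succQuotient w i.succ) :
    fractSum w x (w i.castSucc) = succQuotient w i.castSucc ↔
      x i = (w (Fin.last t) / w i.castSucc - succQuotient w i.succ : ℕ) := by
  have hle : succQuotient w i.succ ≤ w (Fin.last t) / w i.castSucc :=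
    (succQuotient_le_div hw _).trans
      (Nat.div_le_div_left (hw.strictMono i.castSucc_lt_succ).le (hw.pos _))
  have hdiff := fractSum_castSucc_div_sub (x := x) hw i
  rw [hi] at hdiff
  rw [Nat.cast_sub hle, succQuotient_castSucc, hw.cast_last_div, hw.cast_last_div]
  have hcast : (w i.castSucc : K) ≠ 0 := Nat.cast_ne_zero.2 (hw.pos _).ne'
  have hsucc : (w i.succ : K) ≠ 0 := Nat.cast_ne_zero.2 (hw.pos _).ne'
  field_simp at hdiff ⊢
  constructor <;> intro h
  · linear_combination h - hdiff
  · linear_combination h + hdiff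

theorem forall_fractSum_eq_div_iff [CharZero K] (hw : IsDivisorChain w) :
    (∀ i : Fin t, fractSum w x (w i.castSucc) = (w (Fin.last t) / w i.succ : ℕ)) ↔
      ∀ i : Fin t, x i = (w (Fin.last t) / w i.castSucc - succQuotient w i.succ : ℕ) := by
  have hlast : fractSum w x (w (Fin.last t)) = succQuotient w (Fin.last t) := by
    rw [fractSum_last hw, succQuotient_last, Nat.cast_zero]
  simp only [← succQuotient_castSucc]
  refine ⟨fun h i => ?_, fun h i => ?_⟩
  · exact (fractSum_castSucc_eq_succQuotient_iff hw (Fin.lastCases hlast h i.succ)).1 (h i)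
  · refine Fin.reverseInduction
      (motive := fun j => fractSum w x (w j) = succQuotient w j) hlast (fun j hj => ?_) i.castSucc
    exact (fractSum_castSucc_eq_succQuotient_iff hw hj).2 (h j)

theorem bijOn_fractSum_iff [LinearOrder K] [IsStrictOrderedRing K] (hw : IsDivisorChain w)
    (hx : ∀ i, 0 < x i) :
    Set.BijOn (fractSum w x) (Set.Iio (w (Fin.last t))) (Nat.cast '' Set.Iio (w (Fin.last t))) ↔
      ∀ i : Fin t, x i = (w (Fin.last t) / w i.castSucc - succQuotient w i.succ : ℕ) := by
  have hpos (j : Fin (t + 1)) : (0 : K) < w j := Nat.cast_pos.2 (hw.pos j)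
  rw [← forall_fractSum_eq_div_iff hw]
  refine bijOn_Iio_iff_forall_eq_div hw (isDigitAdditive_fractSum hw) fun i => ?_
  rw [← div_lt_div_iff₀ (hpos _) (hpos _), ← sub_pos, fractSum_castSucc_div_sub hw]
  exact div_pos (hx i) (hpos _)

end FractSum

section Generator

/-- The generator of `Λ`: the coordinates in block `b`, of size `s b`, are all `1 / w (b + 1)`. -/
noncomputable def blockGenerator (w : Fin (t + 1) → ℕ) (s : Fin t → ℕ) :
    (b : Fin t) × Fin (s b) → AddCircle (1 : ℝ) :=
  fun x => ((1 / (w x.1.succ : ℝ) : ℝ) : AddCircle (1 : ℝ))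

variable {w : Fin (t + 1) → ℕ} {s : Fin t → ℕ}

theorem fracR_nsmul_one_div (n m : ℕ) :
    fracR (n • ((1 / (m : ℝ) : ℝ) : AddCircle (1 : ℝ))) = ((n % m : ℕ) : ℝ) / m := by
  rw [fracR, ← AddCircle.coe_nsmul, AddCircle.coe_equivIco_mk_apply, nsmul_eq_mul, mul_one_div,
    div_one, mul_one, Int.fract_div_natCast_eq_div_natCast_mod]

theorem ht_nsmul_blockGenerator (n : ℕ) :
    ht (n • blockGenerator w s) = fractSum w (fun b => (s b : ℝ)) n := by
  simp only [ht, fractSum, blockGenerator, Pi.smul_apply, fracR_nsmul_one_div, Fintype.sum_sigma,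
    Finset.sum_const, Finset.card_univ, Fintype.card_fin, nsmul_eq_mul]

theorem addOrderOf_blockGenerator (hw : IsDivisorChain w) (hs : ∀ b, 0 < s b) (ht0 : 0 < t) :
    addOrderOf (blockGenerator w s) = w (Fin.last t) := by
  have horder (x : (b : Fin t) × Fin (s b)) : addOrderOf (blockGenerator w s x) = w x.1.succ :=
    AddCircle.addOrderOf_period_div (hw.pos _)
  obtain ⟨u, rfl⟩ := Nat.exists_eq_succ_of_ne_zero ht0.ne'
  rw [Pi.addOrderOf]
  refine dvd_antisymm (Finset.lcm_dvd fun x _ => ?_) ?_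
  · exact horder x ▸ hw.dvd_last _
  · rw [← Fin.succ_last, ← horder ⟨Fin.last u, 0, hs _⟩]
    exact Finset.dvd_lcm (Finset.mem_univ _)

theorem image_nsmul_Iio_addOrderOf {G : Type*} [AddGroup G] {g : G} (hg : IsOfFinAddOrder g) :
    (fun n : ℕ => n • g) '' Set.Iio (addOrderOf g) = (AddSubgroup.zmultiples g : Set G) := by
  classical
  ext y
  simp [hg.mem_zmultiples_iff_mem_range_addOrderOf]

theorem hasDeltaPoly_blockGenerator_iff (hw : IsDivisorChain w) (hs : ∀ b, 0 < s b) (ht0 : 0 < t)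
    {c : ℕ} (hc : 0 < c) :
    HasDeltaPoly (w (Fin.last t)) c
        (AddSubgroup.zmultiples (blockGenerator w s) :
          Set ((b : Fin t) × Fin (s b) → AddCircle (1 : ℝ))) ↔
      ∀ b, s b = (w (Fin.last t) / w b.castSucc - succQuotient w b.succ) * c := by
  have hcR : (0 : ℝ) < c := Nat.cast_pos.2 hc
  have horder := addOrderOf_blockGenerator hw hs ht0
  have hfin : IsOfFinAddOrder (blockGenerator w s) :=
    addOrderOf_pos_iff.1 (horder ▸ hw.pos _)
  have hheight : ht ∘ (fun n : ℕ => n • blockGenerator w s) =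
      (· * (c : ℝ)) ∘ fractSum w fun b => (s b : ℝ) / c := by
    funext n
    simp only [Function.comp_apply, ht_nsmul_blockGenerator, fractSum, Finset.sum_mul]
    refine Finset.sum_congr rfl fun b _ => ?_
    field_simp
  have htarget : {y : ℝ | ∃ j : ℕ, j < w (Fin.last t) ∧ y = j * c} =
      (· * (c : ℝ)) '' (Nat.cast '' Set.Iio (w (Fin.last t))) := by
    ext y
    simp [eq_comm]
  rw [HasDeltaPoly, ← image_nsmul_Iio_addOrderOf hfin,
    ← Set.bijOn_comp_iff nsmul_injOn_Iio_addOrderOf, horder, hheight, htarget,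
    bijOn_injective_comp_image_iff (mul_left_injective₀ hcR.ne'),
    bijOn_fractSum_iff hw fun b => div_pos (Nat.cast_pos.2 (hs b)) hcR]
  refine forall_congr' fun b => ?_
  rw [div_eq_iff hcR.ne']
  exact_mod_cast Iff.rfl

end Generator

theorem stmt_10 (v t k : ℕ) (ht1 : 1 ≤ t) (hv : 2 ≤ v)
    (w : Fin (t+1) → ℕ) (hw0 : w 0 = 1) (hwlast : w (Fin.last t) = v)
    (hmono : StrictMono w) (hdvd : ∀ i : Fin t, w i.castSucc ∣ w i.succ)
    (s : Fin t → ℕ) (hs : ∀ b, 0 < s b) :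
    HasDeltaPoly v (k+1)
      ((AddSubgroup.zmultiples
        (fun x : (b : Fin t) × Fin (s b) =>
          ((1 / (w x.1.succ : ℝ) : ℝ) : AddCircle (1:ℝ)))) :
        Set (((b : Fin t) × Fin (s b)) → AddCircle (1:ℝ))) ↔
    ((∀ b : Fin t, ∀ h2 : (b : ℕ) + 2 ≤ t,
        s b = (v / w b.castSucc - v / w ⟨(b : ℕ) + 2, by omega⟩) * (k+1)) ∧
      s ⟨t-1, by omega⟩ = (v / w ⟨t-1, by omega⟩) * (k+1)) := by
  subst hwlast
  have hw : IsDivisorChain w := ⟨hw0, hmono, hdvd⟩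
  exact (hasDeltaPoly_blockGenerator_iff hw hs ht1 k.succ_pos).trans
    (forall_succQuotient_succ_iff w ht1
      (P := fun b q => s b = (w (Fin.last t) / w b.castSucc - q) * (k + 1)))
end
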